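/- arXiv:1304.0203 — 3 statements merged into one kernel-verified Lean document; each statement's English description precedes it below -/
import Mathlib

section
/- Define u_n by the recurrence (n+1)^2 u_{n+1} = (2n+1)^2 u_n + (13n^2+2) u_{n-1} + (9n^2-9n+3) u_{n-2} + (n-1)^2 u_{n-3} with u_0 = 1 and u_{-1} = u_{-2} = u_{-3} = 0. Then u_n is an integer for all n ≥ 0. -/
namespace Gamma17

open PowerSeries Finset

/-- Integer binomial product `(2m+k)!/(m! k!^2 (m-k)!)`. -/
def cN (m k : ℕ) : ℕ := (2 * m + k).choose k * (2 * m).choose m * m.choose k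

lemma cN_zero {m k : ℕ} (h : m < k) : cN m k = 0 := by
  simp [cN, Nat.choose_eq_zero_of_lt h]

lemma cN_fact (k d : ℕ) :
    (cN (k + d) k : ℚ) = ((2 * (k + d) + k).factorial : ℚ) /
      ((k + d).factorial * (k.factorial : ℚ) ^ 2 * d.factorial) := by
  have h1 := Nat.cast_add_choose ℚ (a := 2 * (k + d)) (b := k)
  have h2 := Nat.cast_add_choose ℚ (a := k + d) (b := k + d)
  have h3 := Nat.cast_add_choose ℚ (a := k) (b := d)
  rw [Nat.choose_symm_add] at h1
  rw [← two_mul] at h2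
  rw [cN]
  push_cast
  rw [h1, h2, h3]
  have e1 : ((2 * (k + d)).factorial : ℚ) ≠ 0 := by positivity
  have e2 : ((k + d).factorial : ℚ) ≠ 0 := by positivity
  have e3 : (k.factorial : ℚ) ≠ 0 := by positivity
  have e4 : (d.factorial : ℚ) ≠ 0 := by positivity
  field_simp

lemma cN_rec1 (m k : ℕ) : ((k : ℚ) + 1) ^ 2 * cN m (k + 1) =
    (2 * m + k + 1) * (m - k) * cN m k := by
  rcases lt_trichotomy m k with h | h | h
  · simp [cN_zero h, cN_zero (show m < k + 1 by omega)]
  · subst h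
    simp [cN_zero (Nat.lt_succ_self m)]
  · obtain ⟨d, rfl⟩ : ∃ d, m = k + 1 + d := ⟨m - (k + 1), by omega⟩
    have h1 := cN_fact (k + 1) d
    have h2 := cN_fact k (d + 1)
    rw [show k + (d + 1) = k + 1 + d by ring] at h2
    rw [h1, h2]
    rw [show 2 * (k + 1 + d) + (k + 1) = (2 * (k + 1 + d) + k) + 1 by ring]
    rw [Nat.factorial_succ (2 * (k + 1 + d) + k), Nat.factorial_succ k, Nat.factorial_succ d]
    have e2 : ((k + 1 + d).factorial : ℚ) ≠ 0 := by positivity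
    have e3 : (k.factorial : ℚ) ≠ 0 := by positivity
    have e4 : (d.factorial : ℚ) ≠ 0 := by positivity
    push_cast
    field_simp
    ring

lemma cN_rec2 (m k : ℕ) : ((m : ℚ) + 1) * (m + 1 - k) * cN (m + 1) k =
    (2 * m + k + 2) * (2 * m + k + 1) * cN m k := by
  rcases lt_trichotomy (m + 1) k with h | h | h
  · simp [cN_zero h, cN_zero (show m < k by omega)]
  · subst h
    simp [cN_zero (Nat.lt_succ_self m)]
  · obtain ⟨d, rfl⟩ : ∃ d, m = k + d := ⟨m - k, by omega⟩
    have h1 := cN_fact k (d + 1)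
    have h2 := cN_fact k d
    rw [show k + (d + 1) = k + d + 1 by ring] at h1
    rw [h1, h2]
    rw [show 2 * (k + d + 1) + k = (2 * (k + d) + k) + 1 + 1 by ring]
    rw [Nat.factorial_succ (2 * (k + d) + k + 1), Nat.factorial_succ (2 * (k + d) + k),
      Nat.factorial_succ d, Nat.factorial_succ (k + d)]
    have e2 : ((k + d).factorial : ℚ) ≠ 0 := by positivity
    have e3 : (k.factorial : ℚ) ≠ 0 := by positivity
    have e4 : (d.factorial : ℚ) ≠ 0 := by positivity
    push_cast
    field_simp
    ring

/-- Signed coefficient. -/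
def cc (m k : ℕ) : ℤ := (-1) ^ (m + k) * cN m k

lemma cc_zero {m k : ℕ} (h : m < k) : cc m k = 0 := by simp [cc, cN_zero h]

lemma cc_rec1 (m k : ℕ) : ((k : ℤ) + 1) ^ 2 * cc m (k + 1) =
    -((2 * m + k + 1) * (m - k) * cc m k) := by
  have h : ((k : ℤ) + 1) ^ 2 * cN m (k + 1) = (2 * m + k + 1) * (m - k) * cN m k := by
    exact_mod_cast cN_rec1 m k
  simp only [cc, ← add_assoc, pow_succ (-1 : ℤ) (m + k)]
  linear_combination -(-1) ^ (m + k) * h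

lemma cc_rec2 (m k : ℕ) : ((m : ℤ) + 1) * (m + 1 - k) * cc (m + 1) k =
    -((2 * m + k + 2) * (2 * m + k + 1) * cc m k) := by
  have h : ((m : ℤ) + 1) * (m + 1 - k) * cN (m + 1) k =
      (2 * m + k + 2) * (2 * m + k + 1) * cN m k := by
    exact_mod_cast cN_rec2 m k
  simp only [cc, add_right_comm m 1 k, pow_succ (-1 : ℤ) (m + k)]
  linear_combination -(-1) ^ (m + k) * h

/-- Inverse of `1 - X - X^2` over the integers. -/
noncomputable def qZ : ℤ⟦X⟧ := PowerSeries.invOfUnit (1 - X - X ^ 2) 1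

/-- Inverse of `1 + X` over the integers. -/
noncomputable def rZ : ℤ⟦X⟧ := PowerSeries.invOfUnit (1 + X) 1

/-- Base change to the rationals. -/
noncomputable def bc : ℤ⟦X⟧ →+* ℚ⟦X⟧ := PowerSeries.map (Int.castRingHom ℚ)

lemma bc_X : bc X = X := by simp [bc]

noncomputable def q : ℚ⟦X⟧ := bc qZ
noncomputable def r : ℚ⟦X⟧ := bc rZ
noncomputable def w : ℚ⟦X⟧ := X ^ 2 * (1 + X)

lemma hq : (1 - X - X ^ 2) * q = 1 := by
  have h : (1 - X - X ^ 2) * qZ = 1 := PowerSeries.mul_invOfUnit _ _ (by simp)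
  have := congrArg bc h
  simpa [bc_X, q] using this

lemma hr : (1 + X) * r = 1 := by
  have h : (1 + X) * rZ = 1 := PowerSeries.mul_invOfUnit _ _ (by simp)
  have := congrArg bc h
  simpa [bc_X, r] using this

lemma hwr : w * r = X ^ 2 := by
  rw [w]; linear_combination X ^ 2 * hr

/-- The Euler derivation. -/
noncomputable def θ : Derivation ℚ ℚ⟦X⟧ ℚ⟦X⟧ := (X : ℚ⟦X⟧) • PowerSeries.derivative ℚ

lemma θ_X : θ X = X := by simp [θ]

lemma θ_mul (f g : ℚ⟦X⟧) : θ (f * g) = f * θ g + g * θ f := by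
  simp [Derivation.leibniz]

lemma coeff_θ (n : ℕ) (f : ℚ⟦X⟧) : coeff n (θ f) = n * coeff n f := by
  cases n with
  | zero => simp [θ]
  | succ n =>
    simp [θ, PowerSeries.coeff_succ_X_mul, PowerSeries.coeff_derivative]
    ring

lemma θ_q : θ q = X * (1 + 2 * X) * q ^ 2 := by
  have h := congrArg θ hq
  rw [θ_mul] at h
  have h2 : θ (1 - X - X ^ 2) = -X - 2 * X ^ 2 := by
    rw [pow_two, map_sub, map_sub, θ_mul, θ_X, Derivation.map_one_eq_zero]; ring
  rw [h2, Derivation.map_one_eq_zero] at h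
  linear_combination q * h - (θ q) * hq

lemma θ_r : θ r = - X * r ^ 2 := by
  have h := congrArg θ hr
  rw [θ_mul] at h
  rw [map_add, θ_X, Derivation.map_one_eq_zero] at h
  linear_combination r * h - (θ r) * hr

lemma θ_w : θ w = (2 + 3 * X) * r * w := by
  have : θ w = X ^ 2 * (2 + 3 * X) := by
    rw [w, pow_two, θ_mul, θ_mul, map_add, θ_X, Derivation.map_one_eq_zero]; ring
  rw [this]; linear_combination -(2 + 3 * X) * hwr

lemma θ_pow {f g : ℚ⟦X⟧} (h : θ f = g * f) (n : ℕ) : θ (f ^ n) = n * g * f ^ n := by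
  induction n with
  | zero => simp
  | succ n ih => rw [pow_succ, θ_mul, ih, h]; push_cast; ring

noncomputable def T (m k : ℕ) : ℚ⟦X⟧ := (cc m k : ℚ⟦X⟧) * (w ^ m * q ^ (2 * m + k + 1))

lemma T_zero {m k : ℕ} (h : m < k) : T m k = 0 := by simp [T, cc_zero h]

lemma T_rec1 (m k : ℕ) : ((k : ℚ⟦X⟧) + 1) ^ 2 * T m (k + 1) =
    -((2 * m + k + 1) * (m - k) * q * T m k) := by
  have h : ((k : ℚ⟦X⟧) + 1) ^ 2 * (cc m (k + 1) : ℚ⟦X⟧) =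
    -((2 * m + k + 1) * (m - k) * (cc m k : ℚ⟦X⟧)) := by exact_mod_cast congrArg (Int.cast : ℤ → ℚ⟦X⟧) (cc_rec1 m k)
  simp only [T]
  linear_combination (w ^ m * q ^ (2 * m + k + 2)) * h

lemma T_rec2 (m k : ℕ) : ((m : ℚ⟦X⟧) + 1) * (m + 1 - k) * T (m + 1) k =
    -((2 * m + k + 2) * (2 * m + k + 1) * (w * q ^ 2) * T m k) := by
  have h : ((m : ℚ⟦X⟧) + 1) * (m + 1 - k) * (cc (m + 1) k : ℚ⟦X⟧) =
    -((2 * m + k + 2) * (2 * m + k + 1) * (cc m k : ℚ⟦X⟧)) := by exact_mod_cast congrArg (Int.cast : ℤ → ℚ⟦X⟧) (cc_rec2 m k)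
  simp only [T]
  linear_combination (w ^ (m + 1) * q ^ (2 * m + k + 3)) * h

lemma T_rec3 (m k : ℕ) : ((m : ℚ⟦X⟧) + 1) * (k + 1) ^ 2 * T (m + 1) (k + 1) =
    (2 * m + k + 3) * (2 * m + k + 2) * (2 * m + k + 1) * (w * q ^ 3) * T m k := by
  have h1 := T_rec1 (m + 1) k
  have h2 := T_rec2 m k
  push_cast at h1
  linear_combination ((m : ℚ⟦X⟧) + 1) * h1 - (2 * m + k + 3) * q * h2

/-- Logarithmic derivative of `T m k`. -/
noncomputable def g (m k : ℕ) : ℚ⟦X⟧ :=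
  (m : ℚ⟦X⟧) * ((2 + 3 * X) * r) + (2 * (m : ℚ⟦X⟧) + (k : ℚ⟦X⟧) + 1) * (X * (1 + 2 * X) * q)

lemma θ_T (m k : ℕ) : θ (T m k) = g m k * T m k := by
  have h1 := θ_pow θ_w m
  have h2 := θ_pow (f := q) (g := X * (1 + 2 * X) * q) (by rw [θ_q]; ring) (2 * m + k + 1)
  rw [T, θ_mul, θ_mul, h1, h2, Derivation.map_intCast, g]
  push_cast
  ring

lemma θ_g (m k : ℕ) : θ (g m k) =
    (m : ℚ⟦X⟧) * (3 * X * r - (2 + 3 * X) * X * r ^ 2) +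
      (2 * (m : ℚ⟦X⟧) + (k : ℚ⟦X⟧) + 1) * ((X + 4 * X ^ 2) * q + (X * (1 + 2 * X) * q) ^ 2) := by
  have n1 (n : ℕ) : θ (n : ℚ⟦X⟧) = 0 := Derivation.map_natCast _ _
  have n2 : θ (2 : ℚ⟦X⟧) = 0 := n1 2
  have n3 : θ (3 : ℚ⟦X⟧) = 0 := n1 3
  simp only [g, map_add, θ_mul, θ_X, θ_q, θ_r, n1, n2, n3, Derivation.map_one_eq_zero]
  ring

/-- The Picard-Fuchs operator. -/
noncomputable def Lop (f : ℚ⟦X⟧) : ℚ⟦X⟧ :=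
  θ (θ f) - X * (4 * θ (θ f) + 4 * θ f + f) - X ^ 2 * (13 * θ (θ f) + 26 * θ f + 15 * f)
    - X ^ 3 * (9 * θ (θ f) + 27 * θ f + 21 * f) - X ^ 4 * (θ (θ f) + 4 * θ f + 4 * f)

lemma Lop_sum {ι : Type*} (s : Finset ι) (f : ι → ℚ⟦X⟧) :
    Lop (∑ i ∈ s, f i) = ∑ i ∈ s, Lop (f i) := by
  simp only [Lop, map_sum, mul_add, mul_sum, sum_add_distrib, sum_sub_distrib]

noncomputable def ep : ℚ⟦X⟧ := (-4 - 5 * X + 4 * X ^ 2 + 13 * X ^ 3 + 14 * X ^ 4 + 5 * X ^ 5) * r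
noncomputable def al : ℚ⟦X⟧ := (-4 - 2 * X + 9 * X ^ 2 + 9 * X ^ 3 + 4 * X ^ 4 + X ^ 5) * r
noncomputable def be : ℚ⟦X⟧ :=
  (X + 6 * X ^ 2 - 13 * X ^ 3 - 50 * X ^ 4 - 35 * X ^ 5 - 4 * X ^ 6) * q

noncomputable def cA (m k : ℕ) : ℚ⟦X⟧ := m * (m - k) * al * T m k
noncomputable def cB (m k : ℕ) : ℚ⟦X⟧ :=
  k * (2 * (w * q ^ 2) * ep * (1 + 2 * m) + be * k) * T m k
noncomputable def cE (m k : ℕ) : ℚ⟦X⟧ := m * k * ep * T m k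

/-- The rational-function identity behind the certificate. -/
lemma field_identity {K : Type*} [Field K] (x q r m k : K)
    (hq : (1 - x - x ^ 2) * q = 1) (hr : (1 + x) * r = 1) :
    let w := x ^ 2 * (1 + x)
    let g := m * ((2 + 3 * x) * r) + (2 * m + k + 1) * (x * (1 + 2 * x) * q)
    let h := m * (3 * x * r - (2 + 3 * x) * x * r ^ 2) +
      (2 * m + k + 1) * ((x + 4 * x ^ 2) * q + (x * (1 + 2 * x) * q) ^ 2)
    let ep := (-4 - 5 * x + 4 * x ^ 2 + 13 * x ^ 3 + 14 * x ^ 4 + 5 * x ^ 5) * r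
    let al := (-4 - 2 * x + 9 * x ^ 2 + 9 * x ^ 3 + 4 * x ^ 4 + x ^ 5) * r
    let be := (x + 6 * x ^ 2 - 13 * x ^ 3 - 50 * x ^ 4 - 35 * x ^ 5 - 4 * x ^ 6) * q
    (k + 1) * ((g ^ 2 + h) - x * (4 * (g ^ 2 + h) + 4 * g + 1)
      - x ^ 2 * (13 * (g ^ 2 + h) + 26 * g + 15)
      - x ^ 3 * (9 * (g ^ 2 + h) + 27 * g + 21) - x ^ 4 * ((g ^ 2 + h) + 4 * g + 4)) =
    (k + 1) * (- al * ((2 * m + k + 2) * (2 * m + k + 1) * (w * q ^ 2)) - m * (m - k) * al)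
    + (-(2 * (w * q ^ 2) * ep * (1 + 2 * m) + be * (k + 1)) * ((2 * m + k + 1) * (m - k) * q)
        - (k + 1) * (k * (2 * (w * q ^ 2) * ep * (1 + 2 * m) + be * k)))
    + (ep * ((2 * m + k + 3) * (2 * m + k + 2) * (2 * m + k + 1) * (w * q ^ 3))
        - (k + 1) * (m * k * ep)) := by
  intro w g h ep al be
  have ha : (1 - x - x ^ 2) ≠ 0 := left_ne_zero_of_mul_eq_one hq
  have hb : (1 + x) ≠ 0 := left_ne_zero_of_mul_eq_one hr
  obtain rfl : q = 1 / (1 - x - x ^ 2) := by field_simp; linear_combination hq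
  obtain rfl : r = 1 / (1 + x) := by field_simp; linear_combination hr
  simp only [w, g, h, ep, al, be]
  field_simp
  ring

lemma key (m k : ℕ) : Lop (T m k) =
    (cA (m + 1) k - cA m k) + (cB m (k + 1) - cB m k) + (cE (m + 1) (k + 1) - cE m k) := by
  have hk : ((k : ℚ⟦X⟧) + 1) ≠ 0 := by
    intro h
    have := congrArg (PowerSeries.constantCoeff (R := ℚ)) h
    simp only [map_add, map_natCast, map_one, map_zero] at this
    exact Nat.cast_add_one_ne_zero k this
  have hT : θ (θ (T m k)) = (g m k ^ 2 + θ (g m k)) * T m k := by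
    rw [θ_T, θ_mul, θ_T]; ring
  apply mul_left_cancel₀ hk
  have id := by
    have := field_identity (algebraMap (ℚ⟦X⟧) (FractionRing (ℚ⟦X⟧)) X)
      (algebraMap _ _ q) (algebraMap _ _ r) (algebraMap _ _ (m : ℚ⟦X⟧))
      (algebraMap _ _ (k : ℚ⟦X⟧))
      (by have := congrArg (algebraMap (ℚ⟦X⟧) (FractionRing (ℚ⟦X⟧))) hq; simpa using this)
      (by have := congrArg (algebraMap (ℚ⟦X⟧) (FractionRing (ℚ⟦X⟧))) hr; simpa using this)
    exact this
  have id2 : ((k : ℚ⟦X⟧) + 1) * ((g m k ^ 2 + θ (g m k))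
      - X * (4 * (g m k ^ 2 + θ (g m k)) + 4 * g m k + 1)
      - X ^ 2 * (13 * (g m k ^ 2 + θ (g m k)) + 26 * g m k + 15)
      - X ^ 3 * (9 * (g m k ^ 2 + θ (g m k)) + 27 * g m k + 21)
      - X ^ 4 * ((g m k ^ 2 + θ (g m k)) + 4 * g m k + 4)) =
    ((k : ℚ⟦X⟧) + 1) * (- al * ((2 * (m : ℚ⟦X⟧) + (k : ℚ⟦X⟧) + 2) * (2 * (m : ℚ⟦X⟧) + (k : ℚ⟦X⟧) + 1) * (w * q ^ 2)) - (m : ℚ⟦X⟧) * ((m : ℚ⟦X⟧) - (k : ℚ⟦X⟧)) * al)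
    + (-(2 * (w * q ^ 2) * ep * (1 + 2 * (m : ℚ⟦X⟧)) + be * ((k : ℚ⟦X⟧) + 1)) * ((2 * (m : ℚ⟦X⟧) + (k : ℚ⟦X⟧) + 1) * ((m : ℚ⟦X⟧) - (k : ℚ⟦X⟧)) * q)
        - ((k : ℚ⟦X⟧) + 1) * ((k : ℚ⟦X⟧) * (2 * (w * q ^ 2) * ep * (1 + 2 * (m : ℚ⟦X⟧)) + be * (k : ℚ⟦X⟧))))
    + (ep * ((2 * (m : ℚ⟦X⟧) + (k : ℚ⟦X⟧) + 3) * (2 * (m : ℚ⟦X⟧) + (k : ℚ⟦X⟧) + 2) * (2 * (m : ℚ⟦X⟧) + (k : ℚ⟦X⟧) + 1) * (w * q ^ 3))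
        - ((k : ℚ⟦X⟧) + 1) * ((m : ℚ⟦X⟧) * (k : ℚ⟦X⟧) * ep)) := by
    apply IsFractionRing.injective (ℚ⟦X⟧) (FractionRing (ℚ⟦X⟧))
    rw [θ_g]
    simp only [g, w, ep, al, be, map_add, map_sub, map_mul, map_pow, map_neg, map_one, map_ofNat]
    exact id
  clear id
  have r1 := T_rec1 m k
  have r2 := T_rec2 m k
  have r3 := T_rec3 m k
  rw [Lop, hT, θ_T]
  simp only [cA, cB, cE]
  push_cast
  linear_combination (T m k) * id2 - (k + 1) * al * r2
    - (2 * (w * q ^ 2) * ep * (1 + 2 * m) + be * (k + 1)) * r1 - ep * r3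

/-- Truncated generating function. -/
noncomputable def FN (N : ℕ) : ℚ⟦X⟧ := ∑ m ∈ range N, ∑ k ∈ range (N + 1), T m k

lemma Lop_FN (N : ℕ) : Lop (FN N) = ∑ k ∈ range (N + 1), (cA N k + cE N k) := by
  have h1 : ∀ m ∈ range N, Lop (∑ k ∈ range (N + 1), T m k) =
      (∑ k ∈ range (N + 1), (cA (m + 1) k + cE (m + 1) k)) -
        ∑ k ∈ range (N + 1), (cA m k + cE m k) := by
    intro m hm
    have hm := mem_range.1 hm
    have hB : ∑ k ∈ range (N + 1), (cB m (k + 1) - cB m k) = 0 := by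
      rw [sum_range_sub]
      simp [cB, T_zero (show m < N + 1 by omega)]
    have hE : ∑ k ∈ range (N + 1), cE (m + 1) (k + 1) = ∑ k ∈ range (N + 1), cE (m + 1) k := by
      have h2 := sum_range_succ (fun k => cE (m + 1) k) (N + 1)
      rw [sum_range_succ'] at h2
      simpa [cE, T_zero (show m + 1 < N + 1 by omega)] using h2
    simp only [Lop_sum, key, sum_add_distrib, hB]
    simp only [sum_sub_distrib, hE]
    ring
  rw [FN, Lop_sum, sum_congr rfl h1,
    sum_range_sub (fun m => ∑ k ∈ range (N + 1), (cA m k + cE m k))]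
  simp [cA, cE]

lemma dvd_T (m k : ℕ) : X ^ m ∣ T m k := by
  have : (X : ℚ⟦X⟧) ∣ w := ⟨X * (1 + X), by rw [w]; ring⟩
  exact ((pow_dvd_pow_of_dvd this m).mul_right _).mul_left _

lemma coeff_Lop_FN {n N : ℕ} (h : n < N) : coeff n (Lop (FN N)) = 0 := by
  refine PowerSeries.X_pow_dvd_iff.1 ?_ n h
  rw [Lop_FN]
  exact dvd_sum fun k _ => dvd_add ((dvd_T N k).mul_left _) ((dvd_T N k).mul_left _)

lemma coeff_zero_FN {N : ℕ} (h : 0 < N) : coeff 0 (FN N) = 1 := by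
  obtain ⟨N, rfl⟩ : ∃ M, N = M + 1 := ⟨N - 1, by omega⟩
  have hq0 : coeff 0 q = 1 := by
    have := congrArg (coeff 0) hq
    simpa using this
  rw [FN, sum_range_succ', sum_range_succ' (fun k => T 0 k)]
  have h0 : ∀ k, T 0 (k + 1) = 0 := fun k => T_zero (Nat.succ_pos k)
  have h1 : ∀ m k, coeff 0 (T (m + 1) k) = 0 := fun m k =>
    PowerSeries.X_pow_dvd_iff.1 (dvd_T (m + 1) k) 0 (Nat.succ_pos m)
  simp only [map_add, map_sum, h0, h1]
  simpa [T, cc, cN] using hq0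

lemma FN_int (N n : ℕ) : ∃ z : ℤ, coeff n (FN N) = z := by
  have : FN N = bc (∑ m ∈ range N, ∑ k ∈ range (N + 1),
      ((cc m k : ℤ⟦X⟧) * ((X ^ 2 * (1 + X)) ^ m * qZ ^ (2 * m + k + 1)))) := by
    simp only [map_sum, map_mul, map_pow, map_add, map_one, bc_X, map_intCast]
    rfl
  rw [this]
  exact ⟨_, PowerSeries.coeff_map _ _ _⟩

/-- Coefficient recurrence, in shifted form. -/
lemma coeff_rec (f : ℚ⟦X⟧) (v : ℤ → ℚ) (hv : ∀ n : ℕ, v n = coeff n f)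
    (hneg : ∀ j : ℤ, j < 0 → v j = 0) (n : ℕ) (h : coeff (n + 1) (Lop f) = 0) :
    ((n : ℚ) + 1) ^ 2 * v ((n : ℤ) + 1) =
      (2 * (n : ℚ) + 1) ^ 2 * v n + (13 * (n : ℚ) ^ 2 + 2) * v ((n : ℤ) - 1) +
      (9 * (n : ℚ) ^ 2 - 9 * (n : ℚ) + 3) * v ((n : ℤ) - 2) +
      ((n : ℚ) - 1) ^ 2 * v ((n : ℤ) - 3) := by
  have hc (d : ℕ) (hd : d ≤ 4) (a b c : ℕ) :
      coeff (n + 1) (X ^ d * ((a : ℚ⟦X⟧) * θ (θ f) + (b : ℚ⟦X⟧) * θ f + (c : ℚ⟦X⟧) * f)) =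
      (a * ((n : ℚ) + 1 - d) ^ 2 + b * ((n : ℚ) + 1 - d) + c) * v ((n : ℤ) + 1 - d) := by
    rw [PowerSeries.coeff_X_pow_mul']
    split_ifs with hle
    · obtain ⟨e, he⟩ : ∃ e, n + 1 = d + e := ⟨n + 1 - d, by omega⟩
      have e1 : (n : ℤ) + 1 - d = e := by omega
      have e2 : (n : ℚ) + 1 - d = e := by
        have : ((n + 1 : ℕ) : ℚ) = ((d + e : ℕ) : ℚ) := by rw [he]
        push_cast at this; linarith
      have e3 : n + 1 - d = e := by omega
      rw [e1, e2, e3, hv]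
      simp only [map_add, ← nsmul_eq_mul, map_nsmul, coeff_θ]
      simp only [nsmul_eq_mul]
      ring
    · rw [hneg _ (by omega), mul_zero]
  have h0 := hc 0 (by norm_num) 1 0 0
  have h1 := hc 1 (by norm_num) 4 4 1
  have h2 := hc 2 (by norm_num) 13 26 15
  have h3 := hc 3 (by norm_num) 9 27 21
  have h4 := hc 4 (by norm_num) 1 4 4
  have hL : Lop f = X ^ 0 * (((1 : ℕ) : ℚ⟦X⟧) * θ (θ f) + ((0 : ℕ) : ℚ⟦X⟧) * θ f + ((0 : ℕ) : ℚ⟦X⟧) * f)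
    - X ^ 1 * (((4 : ℕ) : ℚ⟦X⟧) * θ (θ f) + ((4 : ℕ) : ℚ⟦X⟧) * θ f + ((1 : ℕ) : ℚ⟦X⟧) * f)
    - X ^ 2 * (((13 : ℕ) : ℚ⟦X⟧) * θ (θ f) + ((26 : ℕ) : ℚ⟦X⟧) * θ f + ((15 : ℕ) : ℚ⟦X⟧) * f)
    - X ^ 3 * (((9 : ℕ) : ℚ⟦X⟧) * θ (θ f) + ((27 : ℕ) : ℚ⟦X⟧) * θ f + ((21 : ℕ) : ℚ⟦X⟧) * f)
    - X ^ 4 * (((1 : ℕ) : ℚ⟦X⟧) * θ (θ f) + ((4 : ℕ) : ℚ⟦X⟧) * θ f + ((4 : ℕ) : ℚ⟦X⟧) * f) := by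
    rw [Lop]; push_cast; ring
  rw [hL] at h
  simp only [map_sub, h0, h1, h2, h3, h4] at h
  push_cast at h
  rw [show (n : ℤ) + 1 - 0 = n + 1 by ring, show (n : ℤ) + 1 - 1 = n by ring,
    show (n : ℤ) + 1 - 2 = n - 1 by ring, show (n : ℤ) + 1 - 3 = n - 2 by ring,
    show (n : ℤ) + 1 - 4 = n - 3 by ring] at h
  linear_combination h

end Gamma17


/-- The coefficients of the holomorphic Picard-Fuchs solution attached to `Γ₁(7)` are integers:
if `(n+1)^2 u_{n+1} = (2n+1)^2 u_n + (13n^2+2) u_{n-1} + (9n^2-9n+3) u_{n-2} + (n-1)^2 u_{n-3}`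
with `u 0 = 1` and `u j = 0` for `j < 0`, then every `u n` is an integer. -/
theorem gamma1_7_integrality (u : ℤ → ℚ) (hu0 : u 0 = 1)
    (huneg : ∀ j : ℤ, j < 0 → u j = 0)
    (hrec : ∀ n : ℕ, ((n : ℚ) + 1) ^ 2 * u ((n : ℤ) + 1) =
      (2 * (n : ℚ) + 1) ^ 2 * u n + (13 * (n : ℚ) ^ 2 + 2) * u ((n : ℤ) - 1) +
      (9 * (n : ℚ) ^ 2 - 9 * (n : ℚ) + 3) * u ((n : ℤ) - 2) +
      ((n : ℚ) - 1) ^ 2 * u ((n : ℤ) - 3)) :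
    ∀ n : ℕ, ∃ z : ℤ, u n = z := by
  intro n
  let N := n + 2
  let v : ℤ → ℚ := fun j => if 0 ≤ j then PowerSeries.coeff j.toNat (Gamma17.FN N) else 0
  have hv : ∀ n : ℕ, v n = PowerSeries.coeff n (Gamma17.FN N) := fun n => by simp [v]
  have hneg : ∀ j : ℤ, j < 0 → v j = 0 := fun j hj => by simp [v, hj]
  have main : ∀ M : ℕ, M ≤ n → ∀ j : ℤ, j ≤ M → u j = v j := by
    intro M
    induction M with
    | zero =>
      intro _ j hj
      rcases lt_or_eq_of_le hj with h | h
      · rw [huneg j (by simpa using h), hneg j (by simpa using h)]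
      · rw [h, hv, Gamma17.coeff_zero_FN (by omega)]
        simpa using hu0
    | succ M ih =>
      intro hM j hj
      rcases lt_or_eq_of_le hj with h | h
      · exact ih (by omega) j (by push_cast at h; omega)
      · have ih := ih (by omega)
        have h1 := hrec M
        have h2 := Gamma17.coeff_rec (Gamma17.FN N) v hv hneg M
          (Gamma17.coeff_Lop_FN (by omega))
        rw [ih M le_rfl, ih (M - 1) (by omega), ih (M - 2) (by omega), ih (M - 3) (by omega),
          ← h2] at h1
        have hne : ((M : ℚ) + 1) ^ 2 ≠ 0 := by positivity
        rw [h]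
        push_cast
        exact mul_left_cancel₀ hne h1
  rw [main n le_rfl n le_rfl, hv]
  exact Gamma17.FN_int N n
end

section
/- Define v_n by the recurrence (n+1)^2 v_{n+1} = -(9n^2+9n+3) v_n - (13n^2+2) v_{n-1} - (2n-1)^2 v_{n-2} + (n-1)^2 v_{n-3} with v_0 = 1 and v_{-1} = v_{-2} = v_{-3} = 0. Then v_n is an integer for all n ≥ 0. -/
open PowerSeries in
/-- The algebraic certificate: the Picard-Fuchs operator applied to `U = Q^(-1/2)` is exact. -/
theorem pf_cert {S : Type*} [CommRing S] (τ δ : Derivation ℤ S S) (t x y U : S) (hxy : x * y = 1)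
    (ht : τ t = t) (hx : τ x = 0) (hy : τ y = 0) (dt : δ t = 0) (dx : δ x = x) (dy : δ y = -y)
    (hU : U ^ 2 * ((1 + 3 * t + t ^ 2 + t * (1 + t) ^ 2 * y) ^ 2 + 4 * (t * (1 + t) * (x + t))) = 1) :
    ∃ G : S, 4 * ((1 + 9 * t + 13 * t ^ 2 + 4 * t ^ 3 - t ^ 4) * τ (τ U) +
      (9 * t + 26 * t ^ 2 + 12 * t ^ 3 - 4 * t ^ 4) * τ U +
      (3 * t + 15 * t ^ 2 + 9 * t ^ 3 - 4 * t ^ 4) * U) = 4 * δ G := by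
  have cc : ∀ (D : Derivation ℤ S S) (n : ℕ) [n.AtLeastTwo], D (OfNat.ofNat n : S) = 0 := by
    intro D n _
    exact D.map_natCast n
  set Q := (1 + 3 * t + t ^ 2 + t * (1 + t) ^ 2 * y) ^ 2 + 4 * (t * (1 + t) * (x + t)) with hQ
  have key : ∀ D : Derivation ℤ S S, 2 * D U = - U ^ 3 * D Q := by
    intro D
    have h := congrArg D hU
    simp only [Derivation.leibniz, Derivation.leibniz_pow, smul_eq_mul, nsmul_eq_mul,
      Derivation.map_one_eq_zero] at h
    push_cast at h
    linear_combination U * h - 2 * D U * hU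
  have key2 : 4 * τ (τ U) = 3 * U ^ 5 * (τ Q) ^ 2 - 2 * U ^ 3 * τ (τ Q) := by
    have h := congrArg τ (key τ)
    simp only [Derivation.leibniz, Derivation.leibniz_pow, smul_eq_mul, nsmul_eq_mul,
      Derivation.map_neg, cc] at h
    push_cast at h
    linear_combination 2 * h - 3 * U ^ 2 * τ Q * key τ
  obtain ⟨N, hN⟩ : ∃ N : S, N = 
    (1 * t ^ 2 + 9 * t ^ 3 + 32 * t ^ 4 + 77 * t ^ 5 + 128 * t ^ 6 + 127 * t ^ 7 + 64 * t ^ 8 + 11 * t ^ 9 + (-1) * t ^ 10) * y ^ 2 +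
    (1 * t ^ 1 + 8 * t ^ 2 + 21 * t ^ 3 + 55 * t ^ 4 + 141 * t ^ 5 + 190 * t ^ 6 + 116 * t ^ 7 + 25 * t ^ 8 + (-1) * t ^ 9) * y +
    ((-2) * t ^ 1 + (-20) * t ^ 2 + (-33) * t ^ 3 + 55 * t ^ 5 + 62 * t ^ 6 + 21 * t ^ 7) +
    ((-2) * t ^ 1 + (-8) * t ^ 2 + (-18) * t ^ 3 + (-18) * t ^ 4 + 4 * t ^ 5 + 8 * t ^ 6) * x := ⟨_, rfl⟩
  refine ⟨N * U ^ 3, ?_⟩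
  have e1 : 4 * δ (N * U ^ 3) = 4 * δ N * U ^ 3 - 6 * N * U ^ 5 * δ Q := by
    simp only [Derivation.leibniz, Derivation.leibniz_pow, smul_eq_mul, nsmul_eq_mul]
    push_cast
    linear_combination 6 * N * U ^ 2 * key δ
  have q1 : τ Q = 2 * (1 + 3 * t + t ^ 2 + t * (1 + t) ^ 2 * y) *
      (3 * t + 2 * t ^ 2 + (t + 4 * t ^ 2 + 3 * t ^ 3) * y)
      + 4 * (t * x + 2 * t ^ 2 * x + 2 * t ^ 2 + 3 * t ^ 3) := by
    rw [hQ]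
    simp only [map_add, Derivation.leibniz, Derivation.leibniz_pow, smul_eq_mul, nsmul_eq_mul,
      Derivation.map_one_eq_zero, cc, ht, hx, hy]
    push_cast
    ring
  have q2 : τ (τ Q) = 2 * (1 + 3 * t + t ^ 2 + t * (1 + t) ^ 2 * y) *
      (3 * t + 4 * t ^ 2 + (t + 8 * t ^ 2 + 9 * t ^ 3) * y)
      + 2 * (3 * t + 2 * t ^ 2 + (t + 4 * t ^ 2 + 3 * t ^ 3) * y) ^ 2
      + 4 * (t * x + 4 * t ^ 2 * x + 4 * t ^ 2 + 9 * t ^ 3) := by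
    rw [q1]
    simp only [map_add, Derivation.leibniz, Derivation.leibniz_pow, smul_eq_mul, nsmul_eq_mul,
      Derivation.map_one_eq_zero, cc, ht, hx, hy]
    push_cast
    ring
  have q3 : δ Q = - 2 * (1 + 3 * t + t ^ 2 + t * (1 + t) ^ 2 * y) * (t * (1 + t) ^ 2 * y)
      + 4 * (t * (1 + t) * x) := by
    rw [hQ]
    simp only [map_add, Derivation.leibniz, Derivation.leibniz_pow, smul_eq_mul, nsmul_eq_mul,
      Derivation.map_one_eq_zero, cc, dt, dx, dy]
    push_cast
    ring
  have q4 : δ N = 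
    -2 * (1 * t ^ 2 + 9 * t ^ 3 + 32 * t ^ 4 + 77 * t ^ 5 + 128 * t ^ 6 + 127 * t ^ 7 + 64 * t ^ 8 + 11 * t ^ 9 + (-1) * t ^ 10) * y ^ 2 -
    (1 * t ^ 1 + 8 * t ^ 2 + 21 * t ^ 3 + 55 * t ^ 4 + 141 * t ^ 5 + 190 * t ^ 6 + 116 * t ^ 7 + 25 * t ^ 8 + (-1) * t ^ 9) * y +
    ((-2) * t ^ 1 + (-8) * t ^ 2 + (-18) * t ^ 3 + (-18) * t ^ 4 + 4 * t ^ 5 + 8 * t ^ 6) * x := by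
    rw [hN]
    simp only [map_add, map_neg, Derivation.leibniz, Derivation.leibniz_pow, smul_eq_mul, nsmul_eq_mul,
      Derivation.map_one_eq_zero, cc, dt, dx, dy]
    push_cast
    ring
  have main : (1 + 9 * t + 13 * t ^ 2 + 4 * t ^ 3 - t ^ 4) * (3 * (τ Q) ^ 2 - 2 * Q * τ (τ Q)) +
      (9 * t + 26 * t ^ 2 + 12 * t ^ 3 - 4 * t ^ 4) * (- 2 * Q * τ Q) +
      (3 * t + 15 * t ^ 2 + 9 * t ^ 3 - 4 * t ^ 4) * (4 * Q ^ 2) = 4 * Q * δ N - 6 * N * δ Q := by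
    rw [q2, q1, q3, q4, hN, hQ]
    linear_combination ((96 * t ^ 2 + 864 * t ^ 3 + 2592 * t ^ 4 + 3432 * t ^ 5 + 2304 * t ^ 6 + 1152 * t ^ 7 + 720 * t ^ 8 + 288 * t ^ 9 + (-24) * t ^ 11) * x ^ 0 * y ^ 0 +
      (96 * t ^ 3 + 768 * t ^ 4 + 2208 * t ^ 5 + 3192 * t ^ 6 + 2760 * t ^ 7 + 1752 * t ^ 8 + 912 * t ^ 9 + 264 * t ^ 10 + (-24) * t ^ 11 + (-24) * t ^ 12) * x ^ 0 * y ^ 1) * hxy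
  rw [e1]
  linear_combination (1 + 9 * t + 13 * t ^ 2 + 4 * t ^ 3 - t ^ 4) * key2 +
    2 * (9 * t + 26 * t ^ 2 + 12 * t ^ 3 - 4 * t ^ 4) * key τ + U ^ 5 * main +
    (2 * U ^ 3 * τ (τ Q) * (1 + 9 * t + 13 * t ^ 2 + 4 * t ^ 3 - t ^ 4) + 
     2 * U ^ 3 * τ Q * (9 * t + 26 * t ^ 2 + 12 * t ^ 3 - 4 * t ^ 4)
     - 4 * (3 * t + 15 * t ^ 2 + 9 * t ^ 3 - 4 * t ^ 4) * (U + U ^ 3 * Q) + 4 * δ N * U ^ 3) * hU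

/-- `pf_cert` for additive maps satisfying the Leibniz rule. -/
theorem pf_cert_add {S : Type*} [CommRing S] (τ δ : S →+ S)
    (hτ : ∀ a b, τ (a * b) = a * τ b + b * τ a) (hδ : ∀ a b, δ (a * b) = a * δ b + b * δ a)
    (t x y U : S) (hxy : x * y = 1)
    (ht : τ t = t) (hx : τ x = 0) (hy : τ y = 0) (dt : δ t = 0) (dx : δ x = x) (dy : δ y = -y)
    (hU : U ^ 2 * ((1 + 3 * t + t ^ 2 + t * (1 + t) ^ 2 * y) ^ 2 + 4 * (t * (1 + t) * (x + t))) = 1) :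
    ∃ G : S, 4 * ((1 + 9 * t + 13 * t ^ 2 + 4 * t ^ 3 - t ^ 4) * τ (τ U) +
      (9 * t + 26 * t ^ 2 + 12 * t ^ 3 - 4 * t ^ 4) * τ U +
      (3 * t + 15 * t ^ 2 + 9 * t ^ 3 - 4 * t ^ 4) * U) = 4 * δ G :=
  pf_cert (Derivation.mk' τ.toIntLinearMap hτ) (Derivation.mk' δ.toIntLinearMap hδ)
    t x y U hxy ht hx hy dt dx dy hU

/-- The Euler derivation on integer Laurent polynomials, as a function. -/
noncomputable def eulerFun (p : LaurentPolynomial ℤ) : LaurentPolynomial ℤ :=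
  .ofCoeff (Finsupp.onFinset p.coeff.support (fun n => n * p.coeff n) (by
    intro a h
    simp only [ne_eq, mul_eq_zero, not_or] at h
    simpa using h.2))

theorem coeff_eulerFun (p : LaurentPolynomial ℤ) (n : ℤ) :
    (eulerFun p).coeff n = n * p.coeff n := rfl

theorem eulerFun_add (p q : LaurentPolynomial ℤ) :
    eulerFun (p + q) = eulerFun p + eulerFun q := by
  ext n
  simp [coeff_eulerFun, mul_add]

theorem eulerFun_CT (a n : ℤ) :
    eulerFun (LaurentPolynomial.C a * LaurentPolynomial.T n) =
      (n : LaurentPolynomial ℤ) * (LaurentPolynomial.C a * LaurentPolynomial.T n) := by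
  have h : (n : LaurentPolynomial ℤ) = LaurentPolynomial.C n := by simp
  rw [h, ← mul_assoc, ← map_mul, ← LaurentPolynomial.single_eq_C_mul_T,
    ← LaurentPolynomial.single_eq_C_mul_T]
  ext m
  rw [coeff_eulerFun]
  simp only [AddMonoidAlgebra.coeff_single, Finsupp.single_apply]
  split_ifs with h
  · rw [h]
  · simp

theorem eulerFun_mul (p q : LaurentPolynomial ℤ) :
    eulerFun (p * q) = p * eulerFun q + q * eulerFun p := by
  induction p using LaurentPolynomial.induction_on' with
  | add p p' hp hp' => rw [add_mul, eulerFun_add, hp, hp', eulerFun_add]; ring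
  | C_mul_T n a =>
    induction q using LaurentPolynomial.induction_on' with
    | add p p' hp hp' => rw [mul_add, eulerFun_add, hp, hp', eulerFun_add]; ring
    | C_mul_T m b =>
      have h : (LaurentPolynomial.C a * LaurentPolynomial.T n) *
          (LaurentPolynomial.C b * LaurentPolynomial.T m) =
          LaurentPolynomial.C (a * b) * LaurentPolynomial.T (n + m) := by
        rw [map_mul, LaurentPolynomial.T_add]; ring
      rw [h, eulerFun_CT, eulerFun_CT, eulerFun_CT, ← h]
      push_cast
      ring

theorem eulerFun_zero : eulerFun 0 = 0 := by
  ext n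
  simp [coeff_eulerFun]

theorem eulerFun_one : eulerFun 1 = 0 := by
  have h := eulerFun_mul 1 1
  simpa using h

open PowerSeries in
/-- Coefficientwise Euler derivation. -/
noncomputable def deltaD : (LaurentPolynomial ℤ)⟦X⟧ →+ (LaurentPolynomial ℤ)⟦X⟧ where
  toFun := fun f => PowerSeries.mk fun n => eulerFun (coeff n f)
  map_zero' := by ext1 n; simp [eulerFun_zero]
  map_add' := fun f g => by ext1 n; simp [eulerFun_add]

open PowerSeries in
theorem coeff_deltaD (f : (LaurentPolynomial ℤ)⟦X⟧) (n : ℕ) :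
    coeff n (deltaD f) = eulerFun (coeff n f) := by
  change coeff n (PowerSeries.mk fun n => eulerFun (coeff n f)) = _
  simp

open PowerSeries in
theorem deltaD_mul (f g : (LaurentPolynomial ℤ)⟦X⟧) :
    deltaD (f * g) = f * deltaD g + g * deltaD f := by
  ext1 n
  have hs : ∀ (s : Finset (ℕ × ℕ)) (F : ℕ × ℕ → LaurentPolynomial ℤ),
      eulerFun (∑ i ∈ s, F i) = ∑ i ∈ s, eulerFun (F i) := by
    intro s F
    exact map_sum (AddMonoidHom.mk' eulerFun eulerFun_add) F s
  rw [mul_comm g]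
  simp only [coeff_deltaD, map_add, coeff_mul, hs, eulerFun_mul, Finset.sum_add_distrib]
  congr 1
  exact Finset.sum_congr rfl fun i _ => mul_comm _ _

open PowerSeries in
/-- The Euler derivation in the power series variable. -/
noncomputable def tauD : (LaurentPolynomial ℤ)⟦X⟧ →+ (LaurentPolynomial ℤ)⟦X⟧ where
  toFun := fun f => X * d⁄dX (LaurentPolynomial ℤ) f
  map_zero' := by simp
  map_add' := fun f g => by rw [map_add, mul_add]

open PowerSeries in
theorem tauD_apply (f : (LaurentPolynomial ℤ)⟦X⟧) :
    tauD f = X * d⁄dX (LaurentPolynomial ℤ) f := rfl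

open PowerSeries in
theorem tauD_mul (f g : (LaurentPolynomial ℤ)⟦X⟧) :
    tauD (f * g) = f * tauD g + g * tauD f := by
  simp only [tauD_apply, Derivation.leibniz, smul_eq_mul]
  ring

open PowerSeries in
theorem coeff_tauD (f : (LaurentPolynomial ℤ)⟦X⟧) (n : ℕ) :
    coeff n (tauD f) = n * coeff n f := by
  rw [tauD_apply]
  cases n with
  | zero => simp
  | succ n => rw [coeff_succ_X_mul, coeff_derivative]; push_cast; ring

open PowerSeries in
theorem exists_invsqrt (A B : (LaurentPolynomial ℤ)⟦X⟧) (hA : constantCoeff A = 1) :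
    ∃ U : (LaurentPolynomial ℤ)⟦X⟧, U ^ 2 * (A ^ 2 + 4 * (X * B)) = 1 ∧ constantCoeff U = 1 := by
  have hH : HenselianRing (LaurentPolynomial ℤ)⟦X⟧ (Ideal.span {X}) := inferInstance
  obtain ⟨y, hy, hy0⟩ := hH.is_henselian
    (Polynomial.X ^ 2 + Polynomial.C A * Polynomial.X - Polynomial.C (X * B)) (by monicity!) 0
    (by simp [Ideal.mem_span_singleton]) (by
      have : IsUnit A := by rw [PowerSeries.isUnit_iff_constantCoeff, hA]; exact isUnit_one
      simpa using this.map _)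
  simp only [Polynomial.IsRoot.def, Polynomial.eval_sub, Polynomial.eval_add, Polynomial.eval_pow,
    Polynomial.eval_X, Polynomial.eval_mul, Polynomial.eval_C] at hy
  rw [sub_zero, Ideal.mem_span_singleton, X_dvd_iff] at hy0
  have hc : constantCoeff (2 * y + A) = 1 := by simp [hy0, hA]
  have hu : IsUnit (2 * y + A) := by
    rw [PowerSeries.isUnit_iff_constantCoeff, hc]; exact isUnit_one
  obtain ⟨U, hU⟩ := hu.exists_right_inv
  refine ⟨U, ?_, ?_⟩
  · linear_combination (1 + (2 * y + A) * U) * hU - 4 * U ^ 2 * hy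
  · have := congrArg constantCoeff hU
    rw [map_mul, hc] at this
    simpa using this

open PowerSeries LaurentPolynomial in
theorem exists_int_seq : ∃ c : ℤ → ℤ, c 0 = 1 ∧ (∀ j < 0, c j = 0) ∧
    ∀ n : ℕ, ((n : ℤ) + 1) ^ 2 * c ((n : ℤ) + 1) =
      -(9 * (n : ℤ) ^ 2 + 9 * (n : ℤ) + 3) * c n - (13 * (n : ℤ) ^ 2 + 2) * c ((n : ℤ) - 1) -
      (2 * (n : ℤ) - 1) ^ 2 * c ((n : ℤ) - 2) + ((n : ℤ) - 1) ^ 2 * c ((n : ℤ) - 3) := by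
  set t : (LaurentPolynomial ℤ)⟦X⟧ := X with ht
  set x : (LaurentPolynomial ℤ)⟦X⟧ := PowerSeries.C (T 1) with hx
  set y : (LaurentPolynomial ℤ)⟦X⟧ := PowerSeries.C (T (-1)) with hy
  have eT : ∀ n : ℤ, eulerFun (T n) = (n : LaurentPolynomial ℤ) * T n := by
    intro n
    simpa using eulerFun_CT 1 n
  obtain ⟨U, hU, hU0⟩ := exists_invsqrt (1 + 3 * t + t ^ 2 + t * (1 + t) ^ 2 * y)
    ((1 + t) * (x + t)) (by simp [ht])
  obtain ⟨G, hG⟩ := pf_cert_add tauD deltaD tauD_mul deltaD_mul t x y U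
    (by rw [hx, hy, ← map_mul, ← T_add]; simp)
    (by simp [tauD_apply, ht])
    (by simp [tauD_apply, hx])
    (by simp [tauD_apply, hy])
    (by ext1 n; rw [coeff_deltaD, ht, coeff_X]; split_ifs <;> simp [eulerFun_zero, eulerFun_one])
    (by ext1 n; rw [coeff_deltaD, hx, coeff_C]; split_ifs <;> simp [eulerFun_zero, eT])
    (by ext1 n; rw [coeff_deltaD, hy, map_neg, coeff_C]
        split_ifs
        · rw [eT, Int.cast_neg, Int.cast_one, neg_one_mul]
        · rw [eulerFun_zero, neg_zero])
    (by linear_combination hU)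
  let ct : LaurentPolynomial ℤ →+ ℤ :=
    { toFun := fun p => p.coeff 0, map_zero' := by simp, map_add' := by simp }
  have ctn : ∀ (n : ℤ) (p : LaurentPolynomial ℤ), ct ((n : LaurentPolynomial ℤ) * p) = n * ct p := by
    intro n p
    rw [← zsmul_eq_mul, map_zsmul, smul_eq_mul]
  -- the coefficient form of the exactness statement
  have hcoef : ∀ n : ℕ, ct (coeff n
      ((1 + 9 * t + 13 * t ^ 2 + 4 * t ^ 3 - t ^ 4) * tauD (tauD U) +
      (9 * t + 26 * t ^ 2 + 12 * t ^ 3 - 4 * t ^ 4) * tauD U +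
      (3 * t + 15 * t ^ 2 + 9 * t ^ 3 - 4 * t ^ 4) * U)) = 0 := by
    intro n
    have h4 : ∀ F : (LaurentPolynomial ℤ)⟦X⟧, ct (coeff n (4 * F)) = 4 * ct (coeff n F) := by
      intro F
      have : (4 : (LaurentPolynomial ℤ)⟦X⟧) * F = (4 : ℤ) • F := by simp
      rw [this, map_zsmul, map_zsmul, smul_eq_mul]
    have h := congrArg (fun F => ct (coeff n F)) hG
    simp only [h4] at h
    have h0 : ct (coeff n (deltaD G)) = 0 := by
      rw [coeff_deltaD]
      change (eulerFun _).coeff 0 = 0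
      rw [coeff_eulerFun, zero_mul]
    rw [h0] at h
    omega
  let w : ℤ → LaurentPolynomial ℤ := fun j => if 0 ≤ j then coeff j.toNat U else 0
  have wn : ∀ n : ℕ, w n = coeff n U := by intro n; simp [w]
  have wneg : ∀ j < 0, w j = 0 := by intro j hj; simp [w, not_le.mpr hj]
  refine ⟨fun j => ct (w j), ?_, ?_, ?_⟩
  · have := wn 0
    simp only [Nat.cast_zero] at this
    simp only [this, coeff_zero_eq_constantCoeff, hU0]
    change (1 : LaurentPolynomial ℤ).coeff 0 = 1
    simp
  · intro j hj
    simp only [wneg j hj, map_zero]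
  · intro n
    have h := hcoef (n + 1)
    -- coefficients of `X ^ k * F`
    have hX : ∀ (k : ℕ) (F : (LaurentPolynomial ℤ)⟦X⟧) (a : ℤ → LaurentPolynomial ℤ),
        (∀ n : ℕ, a n = coeff n F) → (∀ j < 0, a j = 0) →
        coeff (n + 1) (X ^ k * F) = a ((n : ℤ) + 1 - k) := by
      intro k F a ha ha'
      rw [coeff_X_pow_mul']
      split_ifs with hk
      · rw [← ha]; congr 1; push_cast [hk]; ring
      · rw [ha']; omega
    let P (k : ℕ) (a b c : ℤ) : (LaurentPolynomial ℤ)⟦X⟧ :=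
      X ^ k * (a • tauD (tauD U) + b • tauD U + c • U)
    have hP : ∀ (k : ℕ) (a b c : ℤ), ct (coeff (n + 1) (P k a b c)) =
        (a * ((n : ℤ) + 1 - k) ^ 2 + b * ((n : ℤ) + 1 - k) + c) * ct (w ((n : ℤ) + 1 - k)) := by
      intro k a b c
      rw [hX k _ (fun j => ((a * j ^ 2 + b * j + c : ℤ) : LaurentPolynomial ℤ) * w j), ctn]
      · intro m
        have hz : ∀ (a : ℤ) (F : (LaurentPolynomial ℤ)⟦X⟧),
            coeff m (a • F) = (a : LaurentPolynomial ℤ) * coeff m F := by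
          intro a F
          rw [map_zsmul, zsmul_eq_mul]
        rw [map_add, map_add, hz, hz, hz, coeff_tauD, coeff_tauD, wn]
        push_cast
        ring
      · intro j hj
        rw [wneg j hj, mul_zero]
    have hsplit : ((1 + 9 * t + 13 * t ^ 2 + 4 * t ^ 3 - t ^ 4) * tauD (tauD U) +
      (9 * t + 26 * t ^ 2 + 12 * t ^ 3 - 4 * t ^ 4) * tauD U +
      (3 * t + 15 * t ^ 2 + 9 * t ^ 3 - 4 * t ^ 4) * U) =
      P 0 1 0 0 + P 1 9 9 3 + P 2 13 26 15 + P 3 4 12 9 + P 4 (-1) (-4) (-4) := by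
      simp only [P, zsmul_eq_mul, ht]
      push_cast
      ring
    rw [hsplit] at h
    simp only [map_add, hP] at h
    push_cast at h
    have e0 : (n : ℤ) + 1 - 0 = n + 1 := by ring
    have e1 : (n : ℤ) + 1 - 1 = n := by ring
    have e2 : (n : ℤ) + 1 - 2 = n - 1 := by ring
    have e3 : (n : ℤ) + 1 - 3 = n - 2 := by ring
    have e4 : (n : ℤ) + 1 - 4 = n - 3 := by ring
    rw [e0, e1, e2, e3, e4] at h
    linear_combination h

/-- The coefficients of the holomorphic Picard-Fuchs solution at infinity attached to `Γ₁(7)`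
are integers: if `(n+1)^2 v_{n+1} = -(9n^2+9n+3) v_n - (13n^2+2) v_{n-1} - (2n-1)^2 v_{n-2}
+ (n-1)^2 v_{n-3}` with `v 0 = 1` and `v j = 0` for `j < 0`, then every `v n` is an integer. -/
theorem gamma1_7_infinity_integrality (v : ℤ → ℚ) (hv0 : v 0 = 1)
    (hvneg : ∀ j : ℤ, j < 0 → v j = 0)
    (hrec : ∀ n : ℕ, ((n : ℚ) + 1) ^ 2 * v ((n : ℤ) + 1) =
      -(9 * (n : ℚ) ^ 2 + 9 * (n : ℚ) + 3) * v n - (13 * (n : ℚ) ^ 2 + 2) * v ((n : ℤ) - 1) -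
      (2 * (n : ℚ) - 1) ^ 2 * v ((n : ℤ) - 2) + ((n : ℚ) - 1) ^ 2 * v ((n : ℤ) - 3)) :
    ∀ n : ℕ, ∃ z : ℤ, v n = z := by
  obtain ⟨c, hc0, hcneg, hcrec⟩ := exists_int_seq
  have key : ∀ m : ℕ, ∀ j : ℤ, j ≤ m → v j = c j := by
    intro m
    induction m with
    | zero =>
      intro j hj
      rcases lt_or_eq_of_le hj with h | h
      · rw [hvneg j (by simpa using h), hcneg j (by simpa using h)]; simp
      · simp only [Nat.cast_zero] at h
        rw [h, hv0, hc0]; simp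
    | succ n ih =>
      intro j hj
      rcases lt_or_eq_of_le hj with h | h
      · exact ih j (by push_cast at h; omega)
      · have h1 := hrec n
        have h2 := congrArg (Int.cast : ℤ → ℚ) (hcrec n)
        push_cast at h2
        rw [ih n le_rfl, ih _ (by omega : (n : ℤ) - 1 ≤ n), ih _ (by omega : (n : ℤ) - 2 ≤ n),
          ih _ (by omega : (n : ℤ) - 3 ≤ n), ← h2] at h1
        have hne : ((n : ℚ) + 1) ^ 2 ≠ 0 := by positivity
        rw [h]
        push_cast
        exact mul_left_cancel₀ hne h1
  intro n
  exact ⟨c n, key n n le_rfl⟩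
end

section
/- Let u_n be rational numbers satisfying (n+1)^2 u_{n+1} = 2^{20}(36n^2+68n+9) u_n − 2^{44}(76n^2+104n−123) u_{n-1} − 2^{71}(16n^2−48n+35) u_{n-2}, with u_0 = 1 and u_{-1} = u_{-2} = 0. Then u_n ∈ ℤ for all n, and moreover 2^{18n} divides u_n. -/
open Nat in
/-- `(2s)! / s!`. -/
def lvE (s : ℕ) : ℚ := ((2 * s)! : ℚ) / (s ! : ℚ)

open Nat in
/-- `1 / (i! (m-i)!)`. -/
def lvH (m i : ℕ) : ℚ := (m.choose i : ℚ) / (m ! : ℚ)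

open Nat in
/-- The summand. -/
def lvF (m i : ℕ) : ℚ := 8 ^ m * (-1 / 8) ^ i * lvH m i * lvE (2 * m + i) / ((m + i)! : ℚ)

/-- The sum. -/
def lvW (m : ℕ) : ℚ := ∑ i ∈ Finset.range (m + 1), lvF m i

open Nat in
/-- Common factor. -/
def lvB (N i : ℕ) : ℚ := 8 ^ N * (-1 / 8) ^ i * lvH (N + 3) i * lvE (2 * N + i) / ((N + 3 + i)! : ℚ)

/-- Certificate polynomial. -/
def lvX (N i : ℚ) : ℚ :=
    (-243695616) + (-1880539136) * N ^ 1 + (-4800053248) * N ^ 2 + (-5644451840) * N ^ 3 + (-3344826368) * N ^ 4 + (-968228864) * N ^ 5 + (-108527616) * N ^ 6 +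
    (-962510848) * i ^ 1 + (-4842946560) * N ^ 1 * i ^ 1 + (-8356462592) * N ^ 2 * i ^ 1 + (-6389170176) * N ^ 3 * i ^ 1 + (-2216558592) * N ^ 4 * i ^ 1 + (-282853376) * N ^ 5 * i ^ 1 +
    (-1185185792) * i ^ 2 + (-3943071744) * N ^ 1 * i ^ 2 + (-4278910976) * N ^ 2 * i ^ 2 + (-1837498368) * N ^ 3 * i ^ 2 + (-265027584) * N ^ 4 * i ^ 2 +
    (-581992448) * i ^ 3 + (-1146683392) * N ^ 1 * i ^ 3 + (-635305984) * N ^ 2 * i ^ 3 + (-98304000) * N ^ 3 * i ^ 3 +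
    (-100335616) * i ^ 4 + (-75497472) * N ^ 1 * i ^ 4 + (-9699328) * N ^ 2 * i ^ 4

/-- Telescoper. -/
def lvG (N i : ℕ) : ℚ := i * (N + 3 + i) * lvX N i * lvB N i

lemma lvE_succ (s : ℕ) : lvE (s + 1) = 2 * (2 * s + 1) * lvE s := by
  unfold lvE
  have h : 2 * (s + 1) = (2 * s + 1) + 1 := by ring
  rw [h, Nat.factorial_succ, Nat.factorial_succ, Nat.factorial_succ]
  have := Nat.factorial_ne_zero s
  push_cast
  field_simp
  ring

lemma lvH_succ (m i : ℕ) : lvH m i = lvH (m + 1) i * (m + 1 - i) := by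
  unfold lvH
  have h0 := Nat.factorial_ne_zero m
  have key : ((m + 1).choose i : ℚ) * (m + 1 - i) = (m + 1) * m.choose i := by
    rcases le_or_gt i (m + 1) with h | h
    · have := Nat.choose_mul_succ_eq m i
      have h2 : ((m + 1 - i : ℕ) : ℚ) = m + 1 - i := by
        rw [Nat.cast_sub h]; push_cast; ring
      rw [← h2]
      have h3 : ((m.choose i * (m + 1) : ℕ) : ℚ) = (((m + 1).choose i * (m + 1 - i) : ℕ) : ℚ) := by
        rw [this]
      push_cast at h3 ⊢
      linarith
    · rw [Nat.choose_eq_zero_of_lt h, Nat.choose_eq_zero_of_lt (by omega)]; simp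
  rw [Nat.factorial_succ]
  push_cast
  field_simp
  linarith

lemma lvH_succ_right (m i : ℕ) (h : i ≤ m) : lvH m (i + 1) = lvH m i * (m - i) / (i + 1) := by
  unfold lvH
  have h0 := Nat.factorial_ne_zero m
  have := Nat.choose_succ_right_eq m i
  have h3 : ((m.choose (i + 1) * (i + 1) : ℕ) : ℚ) = ((m.choose i * (m - i) : ℕ) : ℚ) := by
    rw [this]
  push_cast [Nat.cast_sub h] at h3
  field_simp
  linarith

lemma lvFact (m : ℕ) : (1 : ℚ) / (m.factorial : ℚ) = (m + 1) / ((m + 1).factorial : ℚ) := by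
  have h0 := Nat.factorial_ne_zero m
  rw [Nat.factorial_succ]
  push_cast
  field_simp

lemma lvF3 (N i : ℕ) : lvF (N + 3) i = lvB N i * (32 ^ 3 * ((4 * N + 2 * i + 1) *
    (4 * N + 2 * i + 3) * (4 * N + 2 * i + 5) * (4 * N + 2 * i + 7) * (4 * N + 2 * i + 9) *
    (4 * N + 2 * i + 11))) := by
  unfold lvF lvB
  have e : 2 * (N + 3) + i = 2 * N + i + 1 + 1 + 1 + 1 + 1 + 1 := by ring
  rw [e]
  simp only [lvE_succ]
  push_cast
  ring

lemma lvF2 (N i : ℕ) : lvF (N + 2) i = lvB N i * (32 ^ 2 * ((4 * N + 2 * i + 1) *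
    (4 * N + 2 * i + 3) * (4 * N + 2 * i + 5) * (4 * N + 2 * i + 7)) *
    ((N + 3 - i) * (N + 3 + i))) := by
  unfold lvF lvB
  have e : 2 * (N + 2) + i = 2 * N + i + 1 + 1 + 1 + 1 := by ring
  have e3 : N + 3 + i = N + 2 + i + 1 := by ring
  rw [e, e3, div_eq_mul_one_div, lvFact (N + 2 + i), lvH_succ (N + 2) i]
  simp only [lvE_succ]
  push_cast
  ring

lemma lvF1 (N i : ℕ) : lvF (N + 1) i = lvB N i * (32 * ((4 * N + 2 * i + 1) *
    (4 * N + 2 * i + 3)) *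
    ((N + 3 - i) * (N + 3 + i)) * ((N + 2 - i) * (N + 2 + i))) := by
  unfold lvF lvB
  have e : 2 * (N + 1) + i = 2 * N + i + 1 + 1 := by ring
  have e3 : N + 3 + i = N + 1 + i + 1 + 1 := by ring
  rw [e, e3, div_eq_mul_one_div, lvFact (N + 1 + i), div_eq_mul_one_div (_ + _ : ℚ),
    lvFact (N + 1 + i + 1), lvH_succ (N + 1) i, lvH_succ (N + 1 + 1) i]
  simp only [lvE_succ]
  push_cast
  ring

lemma lvF0 (N i : ℕ) : lvF N i = lvB N i * (
    ((N + 3 - i) * (N + 3 + i)) * ((N + 2 - i) * (N + 2 + i)) * ((N + 1 - i) * (N + 1 + i))) := by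
  unfold lvF lvB
  have e3 : N + 3 + i = N + i + 1 + 1 + 1 := by ring
  rw [e3, div_eq_mul_one_div, lvFact (N + i), div_eq_mul_one_div (_ + _ : ℚ),
    lvFact (N + i + 1), div_eq_mul_one_div (((N + i + 1 : ℕ) : ℚ) + 1),
    lvFact (N + i + 1 + 1), lvH_succ N i, lvH_succ (N + 1) i, lvH_succ (N + 1 + 1) i]
  push_cast
  ring

lemma lvB_succ (N i : ℕ) (h : i ≤ N + 3) : ((i : ℚ) + 1) * (N + 4 + i) * lvB N (i + 1) =
    lvB N i * (-(4 * N + 2 * i + 1) * (N + 3 - i) / 4) := by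
  unfold lvB
  have e : 2 * N + (i + 1) = 2 * N + i + 1 := by ring
  have e3 : N + 3 + (i + 1) = N + 3 + i + 1 := by ring
  rw [e, e3, lvE_succ, lvH_succ_right (N + 3) i h, Nat.factorial_succ]
  have h0 := Nat.factorial_ne_zero (N + 3 + i)
  have h1 : ((i : ℚ) + 1) ≠ 0 := by positivity
  have h2 : ((N : ℚ) + 4 + i) ≠ 0 := by positivity
  have h3 : ((N : ℚ) + 3 + i + 1) ≠ 0 := by positivity
  push_cast
  rw [pow_succ]
  field_simp
  ring

lemma lvTele (N i : ℕ) (h : i ≤ N + 3) :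
    ((N : ℚ) + 3) ^ 2 * lvF (N + 3) i
    - 4 * (36 * ((N : ℚ) + 2) ^ 2 + 68 * ((N : ℚ) + 2) + 9) * lvF (N + 2) i
    + 2 ^ 8 * (76 * ((N : ℚ) + 2) ^ 2 + 104 * ((N : ℚ) + 2) - 123) * lvF (N + 1) i
    + 2 ^ 17 * (16 * ((N : ℚ) + 2) ^ 2 - 48 * ((N : ℚ) + 2) + 35) * lvF N i
    = lvG N (i + 1) - lvG N i := by
  have hG : lvG N (i + 1) = lvX N ((i : ℚ) + 1) *
      (((i : ℚ) + 1) * (N + 4 + i) * lvB N (i + 1)) := by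
    unfold lvG; push_cast; ring
  rw [hG, lvB_succ N i h, lvF3, lvF2, lvF1, lvF0]
  unfold lvG lvX
  ring

lemma lvF_zero (m i : ℕ) (h : m < i) : lvF m i = 0 := by
  unfold lvF lvH
  rw [Nat.choose_eq_zero_of_lt h]; simp

lemma lvW_ext (m k : ℕ) (h : m + 1 ≤ k) : lvW m = ∑ i ∈ Finset.range k, lvF m i := by
  unfold lvW
  apply Finset.sum_subset
  · intro x hx; simp at hx ⊢; omega
  · intro x _ hx; apply lvF_zero; simp at hx; omega

lemma lvW_rec (N : ℕ) :
    ((N : ℚ) + 3) ^ 2 * lvW (N + 3)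
    - 4 * (36 * ((N : ℚ) + 2) ^ 2 + 68 * ((N : ℚ) + 2) + 9) * lvW (N + 2)
    + 2 ^ 8 * (76 * ((N : ℚ) + 2) ^ 2 + 104 * ((N : ℚ) + 2) - 123) * lvW (N + 1)
    + 2 ^ 17 * (16 * ((N : ℚ) + 2) ^ 2 - 48 * ((N : ℚ) + 2) + 35) * lvW N = 0 := by
  rw [lvW_ext (N + 3) (N + 4) (by omega), lvW_ext (N + 2) (N + 4) (by omega),
    lvW_ext (N + 1) (N + 4) (by omega), lvW_ext N (N + 4) (by omega)]
  simp only [Finset.mul_sum]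
  rw [← Finset.sum_sub_distrib, ← Finset.sum_add_distrib, ← Finset.sum_add_distrib]
  rw [Finset.sum_congr rfl (fun i hi => lvTele N i (by simp at hi; omega))]
  rw [Finset.sum_range_sub]
  have h1 : lvG N (N + 4) = 0 := by
    unfold lvG lvB lvH
    rw [Nat.choose_eq_zero_of_lt (by omega)]; simp
  have h2 : lvG N 0 = 0 := by simp [lvG]
  rw [h1, h2, sub_zero]

lemma lvF_int (m i : ℕ) (h : i ≤ m) : lvF m i = (((-1) ^ i * 8 ^ (m - i) *
    (m.choose i * (2 * (2 * m + i)).choose (2 * m + i) * (2 * m + i).choose m : ℕ) : ℤ) : ℚ) := by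
  unfold lvF lvH lvE
  have a1 := Nat.choose_mul_factorial_mul_factorial (show 2 * m + i ≤ 2 * (2 * m + i) by omega)
  have a2 := Nat.choose_mul_factorial_mul_factorial (show m ≤ 2 * m + i by omega)
  rw [show 2 * (2 * m + i) - (2 * m + i) = 2 * m + i by omega] at a1
  rw [show 2 * m + i - m = m + i by omega] at a2
  rw [← a1]
  obtain ⟨d, rfl⟩ := Nat.exists_eq_add_of_le h
  rw [show i + d - i = d by omega]
  have hp : (8 : ℚ) ^ (i + d) * (-1 / 8) ^ i = (-1) ^ i * 8 ^ d := by
    rw [pow_add, div_pow]; field_simp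
  rw [hp]
  have a3 : (((2 * (i + d) + i).factorial : ℕ) : ℚ) = ((2 * (i + d) + i).choose (i + d) : ℚ) *
      ((i + d).factorial : ℚ) * ((i + d + i).factorial : ℚ) := by
    rw [← a2]; push_cast; ring
  have n0 : (((2 * (i + d) + i).factorial : ℕ) : ℚ) ≠ 0 := by
    exact_mod_cast Nat.factorial_ne_zero _
  have n1 : (((i + d).factorial : ℕ) : ℚ) ≠ 0 := by
    exact_mod_cast Nat.factorial_ne_zero _
  have n2 : (((i + d + i).factorial : ℕ) : ℚ) ≠ 0 := by
    exact_mod_cast Nat.factorial_ne_zero _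
  push_cast
  rw [mul_div_assoc _ _ (((2 * (i + d) + i).factorial : ℕ) : ℚ), div_self n0, mul_one]
  rw [a3]
  field_simp

lemma lvW_int (m : ℕ) : ∃ z : ℤ, lvW m = z := by
  refine ⟨∑ i ∈ Finset.range (m + 1), ((-1) ^ i * 8 ^ (m - i) *
    (m.choose i * (2 * (2 * m + i)).choose (2 * m + i) * (2 * m + i).choose m : ℕ) : ℤ), ?_⟩
  unfold lvW
  rw [Int.cast_sum]
  exact Finset.sum_congr rfl (fun i hi => lvF_int m i (by simp at hi; omega))

lemma lvW0 : lvW 0 = 1 := by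
  simp [lvW, lvF, lvH, lvE, Finset.sum_range_succ]

lemma lvW1 : lvW 1 = 36 := by
  simp [lvW, lvF, lvH, lvE, Finset.sum_range_succ, Nat.factorial]
  norm_num

lemma lvW2 : lvW 2 = 420 := by
  simp [lvW, lvF, lvH, lvE, Finset.sum_range_succ, Nat.factorial, Nat.choose]
  norm_num

/-- For the recurrence `(n+1)^2 u_{n+1} = 2^20 (36n^2+68n+9) u_n - 2^44 (76n^2+104n-123) u_{n-1}
- 2^71 (16n^2-48n+35) u_{n-2}` with `u 0 = 1` and `u j = 0` for `j < 0`, every `u n` is an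
integer divisible by `2^(18n)`. -/
theorem example_level_recurrence (u : ℤ → ℚ) (hu0 : u 0 = 1)
    (huneg : ∀ j : ℤ, j < 0 → u j = 0)
    (hrec : ∀ n : ℕ, ((n : ℚ) + 1) ^ 2 * u ((n : ℤ) + 1) =
      2 ^ 20 * (36 * (n : ℚ) ^ 2 + 68 * (n : ℚ) + 9) * u n -
      2 ^ 44 * (76 * (n : ℚ) ^ 2 + 104 * (n : ℚ) - 123) * u ((n : ℤ) - 1) -
      2 ^ 71 * (16 * (n : ℚ) ^ 2 - 48 * (n : ℚ) + 35) * u ((n : ℤ) - 2)) :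
    ∀ n : ℕ, ∃ z : ℤ, u n = z ∧ (2 : ℤ) ^ (18 * n) ∣ z := by
  have main : ∀ n : ℕ, u n = 2 ^ (18 * n) * lvW n := by
    intro n
    induction n using Nat.strong_induction_on with
    | _ n ih =>
      match n, ih with
      | 0, _ => simp [hu0, lvW0]
      | 1, _ =>
        have h := hrec 0
        have e1 := huneg (-1) (by norm_num)
        have e2 := huneg (-2) (by norm_num)
        norm_num [hu0, e1, e2] at h
        rw [lvW1]
        norm_num [h]
      | 2, ih =>
        have h := hrec 1
        have h1 := ih 1 (by norm_num)
        have e1 := huneg (-1) (by norm_num)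
        rw [lvW1] at h1
        norm_num [hu0, e1] at h h1
        rw [lvW2]
        rw [h1] at h
        norm_num
        linarith
      | N + 3, ih =>
        have h := hrec (N + 2)
        have i2 := ih (N + 2) (by omega)
        have i1 := ih (N + 1) (by omega)
        have i0 := ih N (by omega)
        have c3 : ((N + 2 : ℕ) : ℤ) + 1 = ((N + 3 : ℕ) : ℤ) := by push_cast; ring
        have c1 : ((N + 2 : ℕ) : ℤ) - 1 = ((N + 1 : ℕ) : ℤ) := by push_cast; ring
        have c0 : ((N + 2 : ℕ) : ℤ) - 2 = (N : ℤ) := by push_cast; ring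
        rw [c3, c1, c0, i2, i1, i0] at h
        have w := lvW_rec N
        have hn : ((N : ℚ) + 3) ^ 2 ≠ 0 := by positivity
        apply mul_left_cancel₀ hn
        have p3 : (2 : ℚ) ^ (18 * (N + 3)) = 2 ^ (18 * N) * 2 ^ 54 := by rw [← pow_add]; ring
        have p2 : (2 : ℚ) ^ (18 * (N + 2)) = 2 ^ (18 * N) * 2 ^ 36 := by rw [← pow_add]; ring
        have p1 : (2 : ℚ) ^ (18 * (N + 1)) = 2 ^ (18 * N) * 2 ^ 18 := by rw [← pow_add]; ring
        rw [p2, p1] at h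
        rw [p3]
        push_cast at h ⊢
        linear_combination h - 2 ^ (18 * N) * 2 ^ 54 * w
  intro n
  obtain ⟨z, hz⟩ := lvW_int n
  exact ⟨2 ^ (18 * n) * z, by rw [main, hz]; push_cast; ring, dvd_mul_right _ _⟩
end
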